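/- Let (A, Σ, δ) be a finite automaton over a binary alphabet Σ = {0, 1} that contains a cycle with external exit. Then there exists a family ρ = (ρ_x)_{x∈A} of permutations of Σ such that the group generated by the invertible Mealy automaton (A, Σ, δ, ρ) is infinite. -/

import Mathlib

/-!
Let the states of the cycle act on letters as the identity and all other states as the
transposition. The heart of the proof is a rigidity property of finite automaton groups over a
binary alphabet (`fixes_of_fixes_take`): if `G` is finite, there is an `m` such that an element of
`G` fixing the first `m` letters of a word fixes the whole word. Indeed `G` is not transitive on
all levels `Σⁿ`; let `m` be such that `G` is transitive on `Σᵐ` but not on `Σᵐ⁺¹`. An element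
fixing `w ∈ Σᵐ` and exchanging `w0` and `w1` would make `G` transitive on `Σᵐ⁺¹`, so every element
fixing `w` fixes both `w0` and `w1`. As `G` is closed under taking sections
(`mealyGroup_section`), the same applies to every window of `m + 1` consecutive letters, and the
property follows by induction on the word.

Now let `x` be a cycle state from which the letter `i` leads outside the cycle. Following the cycle
for `m` steps so as to end in `x` gives a cycle state that fixes a word `u` of length `m` and
continues as `x`. It sends `u i 0` to `u i 1`, which contradicts rigidity, so the group is infinite.
-/

/-- Extended production function of a Mealy automaton: `mealyMap δ ρ x` is the
action of the state `x` on finite words over the alphabet. -/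
def mealyMap {A S : Type*} (δ : S → A → A) (ρ : A → S → S) : A → List S → List S
  | _, [] => []
  | x, i :: s => ρ x i :: mealyMap δ ρ (δ i x) s

/-- The semigroup generated by a Mealy automaton: the subsemigroup of maps
`Σ* → Σ*` (under composition) generated by the production functions. -/
def mealySemigroup {A S : Type*} (δ : S → A → A) (ρ : A → S → S) :
    Subsemigroup (Function.End (List S)) :=
  Subsemigroup.closure (Set.range fun x => (mealyMap δ ρ x : Function.End (List S)))

/-- The group generated by an invertible Mealy automaton: the subgroup of
permutations of `Σ*` generated by the production functions. -/
def mealyGroup {A S : Type*} (δ : S → A → A) (ρ : A → S → S) :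
    Subgroup (Equiv.Perm (List S)) :=
  Subgroup.closure {f : Equiv.Perm (List S) | ∃ x : A, ⇑f = mealyMap δ ρ x}

/-- A cycle in the automaton `(A, Σ, δ)`: pairwise distinct states
`states 0, …, states (n-1)` with transitions `states k —labels k→ states (k+1 mod n)`. -/
structure MealyCycle {A S : Type*} (δ : S → A → A) where
  n : ℕ
  npos : 0 < n
  states : Fin n → A
  labels : Fin n → S
  inj : Function.Injective states
  step : ∀ k : Fin n, δ (labels k) (states k) = states ⟨(k + 1) % n, Nat.mod_lt _ npos⟩

/-- The cycle has an external exit. -/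
def HasExternalExit {A S : Type*} {δ : S → A → A} (C : MealyCycle δ) : Prop :=
  ∃ (k : Fin C.n) (i : S), δ i (C.states k) ∉ Set.range C.states

/-- The cycle has an internal exit. -/
def HasInternalExit {A S : Type*} {δ : S → A → A} (C : MealyCycle δ) : Prop :=
  ∃ (k : Fin C.n) (i : S), δ i (C.states k) ∈ Set.range C.states ∧
    δ i (C.states k) ≠ δ (C.labels k) (C.states k)

/-- `v` is reachable from `u` in the automaton `(A, Σ, δ)`. -/
def Reachable {A S : Type*} (δ : S → A → A) (u v : A) : Prop :=
  ∃ s : List S, s.foldl (fun a i => δ i a) u = v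

/-- Action of a word `s ∈ Σ*` on states of powers of the automaton (words over `A`),
via the production functions of the dual automaton: `dualAct δ ρ s = δ_s`. -/
def dualAct {A S : Type*} (δ : S → A → A) (ρ : A → S → S) (s : List S) (u : List A) : List A :=
  s.foldl (fun w i => mealyMap ρ δ i w) u

/-- Two states of a power of a reversible Mealy automaton lie in the same
connected component iff some `δ_s` maps one to the other. -/
def sameComp {A S : Type*} (δ : S → A → A) (ρ : A → S → S) (u w : List A) : Prop :=
  ∃ s : List S, dualAct δ ρ s u = w

section Invertible

variable {A S : Type*} (δ : S → A → A) (ρ : A → Equiv.Perm S)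

/-- The inverse of the extended production function of a state of an invertible automaton. -/
def mealyInv : A → List S → List S
  | _, [] => []
  | x, i :: s => (ρ x).symm i :: mealyInv (δ ((ρ x).symm i) x) s

/-- The extended production function of a state of an invertible automaton, as a permutation. -/
def mealyPerm (x : A) : Equiv.Perm (List S) where
  toFun := mealyMap δ (fun a => ⇑(ρ a)) x
  invFun := mealyInv δ ρ x
  left_inv s := by
    induction s generalizing x with
    | nil => rfl
    | cons i s ih => simp [mealyMap, mealyInv, ih]
  right_inv s := by
    induction s generalizing x with
    | nil => rfl
    | cons i s ih => simp [mealyMap, mealyInv, ih]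

theorem mealyPerm_mem (x : A) : mealyPerm δ ρ x ∈ mealyGroup δ (fun a => ⇑(ρ a)) :=
  Subgroup.subset_closure ⟨x, rfl⟩

variable {δ ρ}

/-- The group of an invertible automaton acts on the tree of words and is closed under sections. -/
theorem mealyGroup_section {g : Equiv.Perm (List S)} (hg : g ∈ mealyGroup δ (fun a => ⇑(ρ a))) :
    g [] = [] ∧ ∃ π : Equiv.Perm S, ∀ i, ∃ g' ∈ mealyGroup δ (fun a => ⇑(ρ a)),
      ∀ s, g (i :: s) = π i :: g' s := by
  unfold mealyGroup at hg
  induction hg using Subgroup.closure_induction with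
  | mem f hf =>
    obtain ⟨x, hx⟩ := hf
    refine ⟨by rw [hx]; rfl, ρ x, fun i => ⟨_, mealyPerm_mem δ ρ (δ i x), fun s => ?_⟩⟩
    rw [hx]; rfl
  | one => exact ⟨rfl, 1, fun i => ⟨1, one_mem _, fun s => rfl⟩⟩
  | mul f g _ _ hf hg =>
    obtain ⟨hf0, π, hπ⟩ := hf
    obtain ⟨hg0, τ, hτ⟩ := hg
    refine ⟨by simp [hf0, hg0], π * τ, fun i => ?_⟩
    obtain ⟨g', hg', hgs⟩ := hτ i
    obtain ⟨f', hf', hfs⟩ := hπ (τ i)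
    exact ⟨f' * g', mul_mem hf' hg', fun s => by simp [hgs, hfs]⟩
  | inv g _ hg =>
    obtain ⟨hg0, π, hπ⟩ := hg
    refine ⟨by rw [Equiv.Perm.inv_eq_iff_eq]; exact hg0.symm, π⁻¹, fun i => ?_⟩
    obtain ⟨g', hg', hgs⟩ := hπ (π⁻¹ i)
    refine ⟨g'⁻¹, inv_mem hg', fun s => ?_⟩
    rw [Equiv.Perm.inv_eq_iff_eq, hgs]
    simp

theorem mealyGroup_length {g : Equiv.Perm (List S)} (hg : g ∈ mealyGroup δ (fun a => ⇑(ρ a)))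
    (s : List S) : (g s).length = s.length := by
  induction s generalizing g with
  | nil => simp [(mealyGroup_section hg).1]
  | cons i s ih =>
    obtain ⟨_, π, hπ⟩ := mealyGroup_section hg
    obtain ⟨g', hg', h⟩ := hπ i
    simp [h, ih hg']

theorem mealyGroup_append_singleton {g : Equiv.Perm (List S)}
    (hg : g ∈ mealyGroup δ (fun a => ⇑(ρ a))) (w : List S) (i : S) :
    ∃ j, g (w ++ [i]) = g w ++ [j] := by
  induction w generalizing g with
  | nil =>
    obtain ⟨h0, π, hπ⟩ := mealyGroup_section hg
    obtain ⟨g', hg', h⟩ := hπ i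
    exact ⟨π i, by simp [h, h0, (mealyGroup_section hg').1]⟩
  | cons a w ih =>
    obtain ⟨_, π, hπ⟩ := mealyGroup_section hg
    obtain ⟨g', hg', h⟩ := hπ a
    obtain ⟨j, hj⟩ := ih hg'
    exact ⟨j, by simp [h, hj]⟩

end Invertible

/-- The group of the automaton acts transitively on the words of length `n`. -/
def LevelTransitive {A S : Type*} (δ : S → A → A) (ρ : A → Equiv.Perm S) (n : ℕ) : Prop :=
  ∀ s t : List S, s.length = n → t.length = n →
    ∃ g ∈ mealyGroup δ (fun a => ⇑(ρ a)), g s = t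

section Binary

variable {A : Type*} {δ : Fin 2 → A → A} {ρ : A → Equiv.Perm (Fin 2)}

theorem exists_not_levelTransitive [Finite (mealyGroup δ (fun a => ⇑(ρ a)))] :
    ∃ n, ¬ LevelTransitive δ ρ n := by
  by_contra! h
  set G := mealyGroup δ (fun a => ⇑(ρ a)) with hG
  set n := Nat.card G with hn
  have hf : Function.Surjective (fun g : G =>
      (⟨g.1 (List.replicate n 0), by rw [mealyGroup_length g.2]; simp⟩ :
        List.Vector (Fin 2) n)) := by
    rintro ⟨t, ht⟩
    obtain ⟨g, hg, hgt⟩ := h n (List.replicate n 0) t (by simp) ht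
    exact ⟨⟨g, hg⟩, Subtype.ext hgt⟩
  have hc : Nat.card (List.Vector (Fin 2) n) ≤ Nat.card G :=
    Nat.card_le_card_of_surjective _ hf
  rw [Nat.card_eq_fintype_card (α := List.Vector (Fin 2) n), card_vector, Fintype.card_fin,
    ← hn] at hc
  exact absurd n.lt_two_pow_self (not_lt.mpr hc)

/-- An element fixing a word `w` but moving `w i` merges the two children of `w` into a single
orbit, which propagates transitivity to the next level. -/
theorem LevelTransitive.succ {m : ℕ} (hm : LevelTransitive δ ρ m) {g : Equiv.Perm (List (Fin 2))}
    (hg : g ∈ mealyGroup δ (fun a => ⇑(ρ a))) {w : List (Fin 2)} {i : Fin 2} (hw : w.length = m)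
    (hgw : g w = w) (hgi : g (w ++ [i]) ≠ w ++ [i]) : LevelTransitive δ ρ (m + 1) := by
  have key : ∀ t : List (Fin 2), t.length = m + 1 →
      ∃ h ∈ mealyGroup δ (fun a => ⇑(ρ a)), h (w ++ [i]) = t := by
    intro t ht
    obtain rfl | ⟨t, a, rfl⟩ := t.eq_nil_or_concat'
    · simp at ht
    obtain ⟨h, hh, hwt⟩ := hm w t hw (by simpa using ht)
    obtain ⟨b, hb⟩ := mealyGroup_append_singleton hh w i
    obtain ⟨c, hc⟩ := mealyGroup_append_singleton (mul_mem hh hg) w i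
    have hbc : b ≠ c := by
      rintro rfl
      apply hgi
      apply h.injective
      rw [hb, ← Equiv.Perm.mul_apply, hc]
      simp [hgw]
    have hor : a = b ∨ a = c := by omega
    rcases hor with rfl | rfl
    · exact ⟨h, hh, by rw [hb, hwt]⟩
    · exact ⟨h * g, mul_mem hh hg, by rw [hc]; simp [hgw, hwt]⟩
  intro s t hs ht
  obtain ⟨f, hf, rfl⟩ := key s hs
  obtain ⟨h, hh, rfl⟩ := key t ht
  exact ⟨h * f⁻¹, mul_mem hh (inv_mem hf), by simp⟩

/-- In a finite automaton group over a binary alphabet, the action on a word is determined by the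
action on a prefix of a fixed length. -/
theorem fixes_of_fixes_take [Finite (mealyGroup δ (fun a => ⇑(ρ a)))] :
    ∃ m : ℕ, ∀ g ∈ mealyGroup δ (fun a => ⇑(ρ a)), ∀ s : List (Fin 2),
      g (s.take m) = s.take m → g s = s := by
  obtain ⟨m, hm, hm'⟩ : ∃ m, LevelTransitive δ ρ m ∧ ¬ LevelTransitive δ ρ (m + 1) := by
    by_contra! h
    obtain ⟨n, hn⟩ := exists_not_levelTransitive (δ := δ) (ρ := ρ)
    refine hn (Nat.rec ?_ h n)
    intro s t hs ht
    exact ⟨1, one_mem _, by simp_all⟩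
  refine ⟨m, fun g hg s => ?_⟩
  induction s generalizing g with
  | nil => simp
  | cons i s ih =>
    intro hgs
    by_cases hlen : s.length < m
    · rwa [List.take_of_length_le (by simpa using hlen)] at hgs
    have hlt : m < (i :: s).length := by simp; omega
    have hsucc : g ((i :: s).take (m + 1)) = (i :: s).take (m + 1) := by
      by_contra hne
      rw [List.take_succ_eq_append_getElem hlt] at hne
      exact hm' (hm.succ hg (by simp; omega) hgs hne)
    obtain ⟨_, π, hπ⟩ := mealyGroup_section hg
    obtain ⟨g', hg', h⟩ := hπ i
    rw [List.take_succ_cons, h, List.cons.injEq] at hsucc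
    rw [h, hsucc.1, ih g' hg' hsucc.2]

/-- If the cycle states fix all letters, then for any length `N` there is a cycle state fixing a
word of length `N` (read along the cycle) and ending in a prescribed cycle state. -/
theorem MealyCycle.exists_fixed_word (C : MealyCycle δ)
    (hρ : ∀ k, ρ (C.states k) = 1) (N : ℕ) (k : Fin C.n) :
    ∃ x u, u.length = N ∧ ∀ t, mealyMap δ (fun a => ⇑(ρ a)) x (u ++ t) =
      u ++ mealyMap δ (fun a => ⇑(ρ a)) (C.states k) t := by
  induction N generalizing k with
  | zero => exact ⟨C.states k, [], rfl, fun t => rfl⟩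
  | succ N ih =>
    obtain ⟨p, hp⟩ : ∃ p : Fin C.n,
        (⟨(p + 1) % C.n, Nat.mod_lt _ C.npos⟩ : Fin C.n) = k := by
      refine ⟨⟨(k + (C.n - 1)) % C.n, Nat.mod_lt _ C.npos⟩, Fin.ext ?_⟩
      have h1 : (k : ℕ) + (C.n - 1) + 1 = k + C.n := by have := C.npos; omega
      simp [h1, Nat.mod_eq_of_lt k.2]
    obtain ⟨x, u, hu, h⟩ := ih p
    refine ⟨x, u ++ [C.labels p], by simp [hu], fun t => ?_⟩
    rw [List.append_assoc, h]
    simp [mealyMap, hρ, C.step, hp]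

end Binary

/-- Lemma 2: any finite automaton over the binary alphabet `{0,1}`
with a cycle with external exit can be enriched with invertible production functions
so that the generated group is infinite. -/
theorem binary_cycle_external_exit_infinite_group
    {A : Type*} [Fintype A] [Nonempty A]
    (δ : Fin 2 → A → A)
    (C : MealyCycle δ) (hC : HasExternalExit C) :
    ∃ ρ : A → Equiv.Perm (Fin 2), Infinite ↥(mealyGroup δ (fun a => ⇑(ρ a))) := by
  classical
  obtain ⟨k, i, hki⟩ := hC
  let ρ : A → Equiv.Perm (Fin 2) := fun a =>
    if a ∈ Set.range C.states then 1 else Equiv.swap 0 1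
  have hin : ∀ k, ρ (C.states k) = 1 := fun k => if_pos ⟨k, rfl⟩
  have hout : ρ (δ i (C.states k)) = Equiv.swap 0 1 := if_neg hki
  refine ⟨ρ, ?_⟩
  by_contra hfin
  rw [not_infinite_iff_finite] at hfin
  obtain ⟨m, hm⟩ := fixes_of_fixes_take (δ := δ) (ρ := ρ)
  obtain ⟨x, u, hu, h⟩ := C.exists_fixed_word hin m k
  have hfix := hm (mealyPerm δ ρ x) (mealyPerm_mem δ ρ x) (u ++ [i, 0]) (by
    have := h []
    simp only [mealyMap, List.append_nil] at this
    rw [List.take_left' hu]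
    exact this)
  change mealyMap δ (fun a => ⇑(ρ a)) x (u ++ [i, 0]) = _ at hfix
  rw [h] at hfix
  simp [mealyMap, hin, hout] at hfix
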